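/- arXiv:0804.3682 — 2 statements merged into one kernel-verified Lean document; each statement's English description precedes it below -/
import Mathlib

section
/- Let p be an odd prime for which 2 is a primitive root modulo p (i.e., 2 has multiplicative order p−1 modulo p), let a ∈ {0,1,…,p−1} and j ∈ {0,1}. Then for every ε > 0 one has T^{(j)}_{p,a}(x) = x/(2p) + O(x^{α+ε}) as x → ∞, where α = ln p / ((p−1)·ln 2). (Upper-bound half of Theorem 2.) -/
/-!
Detecting the residue class by `p`-th roots of unity `z` and the parity of `s n` by the sign
`(-1) ^ s n` reduces the claim to a bound `O(x ^ α)` for the twisted sums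
`F z x = ∑ n < x, (-1) ^ s n * z ^ n`.

Splitting `n` according to its last binary digit gives `F z (2 * x) = (1 - z) * F (z ^ 2) x`.
Iterating `p - 1` times, and using `z ^ 2 ^ (p - 1) = z`, gives
`F z (2 ^ (p - 1) * y) = (∏ i < p - 1, (1 - z ^ 2 ^ i)) * F z y` (`F_two_pow_mul`). Since `2` is a
primitive root, for `z ≠ 1` the product runs over all nontrivial `p`-th roots of unity, so it
equals `p`; for `z = 1` it vanishes (`norm_prod_one_sub_le`). Hence
`‖F z x‖ ≤ p * ‖F z (x / 2 ^ (p - 1))‖ + 2 ^ (p - 1)`, and because `(2 ^ (p - 1)) ^ α = p` this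
recursion yields `‖F z x‖ ≤ K * x ^ α` (`exists_F_bound`), even without the `ε`.
-/

/-- `s n` is the number of 1's in the binary expansion of `n`. -/
def s (n : ℕ) : ℕ := (Nat.digits 2 n).sum

/-- `T m a j x` counts natural numbers `n < x` with `n ≡ a (mod m)` and `s n ≡ j (mod 2)`. -/
def T (m a j x : ℕ) : ℕ :=
  ((Finset.range x).filter (fun n => n % m = a ∧ s n % 2 = j)).card

open Finset

lemma s_two_mul (n : ℕ) : s (2 * n) = s n := by
  rcases Nat.eq_zero_or_pos n with rfl | h
  · simp
  · unfold s
    rw [Nat.digits_def' (by norm_num) (by omega)]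
    simp

lemma s_two_mul_add_one (n : ℕ) : s (2 * n + 1) = s n + 1 := by
  unfold s
  rw [Nat.digits_def' (by norm_num) (by omega)]
  have h1 : (2 * n + 1) % 2 = 1 := by omega
  have h2 : (2 * n + 1) / 2 = n := by omega
  rw [h1, h2, List.sum_cons, add_comm]

/-- The Thue–Morse exponential sum `∑ n < x, (-1) ^ s n * z ^ n`. -/
noncomputable def F (z : ℂ) (x : ℕ) : ℂ := ∑ n ∈ range x, (-1) ^ s n * z ^ n

lemma F_two_mul (z : ℂ) (x : ℕ) : F z (2 * x) = (1 - z) * F (z ^ 2) x := by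
  unfold F
  induction x with
  | zero => simp
  | succ x ih =>
    rw [show 2 * (x + 1) = 2 * x + 1 + 1 by ring, sum_range_succ, sum_range_succ, ih,
      sum_range_succ, s_two_mul, s_two_mul_add_one]
    ring

lemma F_two_pow_mul (z : ℂ) (k y : ℕ) :
    F z (2 ^ k * y) = (∏ i ∈ range k, (1 - z ^ 2 ^ i)) * F (z ^ 2 ^ k) y := by
  induction k generalizing y with
  | zero => simp
  | succ k ih =>
    rw [pow_succ, mul_assoc, ih, F_two_mul, prod_range_succ, ← pow_mul]
    ring

lemma norm_F_add_sub_le {z : ℂ} (hz : ‖z‖ = 1) (x r : ℕ) : ‖F z (x + r) - F z x‖ ≤ r := by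
  unfold F
  rw [sum_range_add, add_sub_cancel_left]
  refine (norm_sum_le _ _).trans ?_
  simp [hz]

lemma norm_F_le {z : ℂ} (hz : ‖z‖ = 1) (x : ℕ) : ‖F z x‖ ≤ x := by
  simpa [F] using norm_F_add_sub_le hz 0 x

/-- When `2` is a primitive root, its powers `2 ^ i`, `i < p - 1`, run over all nonzero residues. -/
lemma image_two_pow {p : ℕ} (hp : p.Prime) (hprim : orderOf (2 : ZMod p) = p - 1) :
    (range (p - 1)).image (fun i => 2 ^ i % p) = (range (p - 1)).image (fun i => i + 1) := by
  have := Fact.mk hp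
  have hp2 := hp.two_le
  have h2 : (2 : ZMod p) ≠ 0 := by
    intro h
    rw [h, orderOf_eq_zero_iff'.2] at hprim
    · omega
    · intro n hn
      rw [zero_pow hn.ne']
      exact zero_ne_one
  apply eq_of_subset_of_card_le
  · intro m hm
    simp only [mem_image, mem_range] at hm ⊢
    obtain ⟨i, -, rfl⟩ := hm
    have hlt : 2 ^ i % p < p := Nat.mod_lt _ hp.pos
    have hne : 2 ^ i % p ≠ 0 := by
      intro h
      have h' : ((2 ^ i : ℕ) : ZMod p) = 0 :=
        (ZMod.natCast_eq_zero_iff _ _).2 (Nat.dvd_of_mod_eq_zero h)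
      push_cast at h'
      exact pow_ne_zero i h2 h'
    exact ⟨2 ^ i % p - 1, by omega, by omega⟩
  · rw [card_image_of_injective _ (add_left_injective 1), card_image_of_injOn]
    intro i hi k hk h
    have h' : ((2 ^ i : ℕ) : ZMod p) = ((2 ^ k : ℕ) : ZMod p) :=
      (ZMod.natCast_eq_natCast_iff' _ _ _).2 h
    push_cast at h'
    refine pow_injOn_Iio_orderOf ?_ ?_ h'
    · simpa [hprim] using hi
    · simpa [hprim] using hk

/-- For a primitive `z` this is the evaluation `Φ_p(1) = p` of the cyclotomic polynomial. -/
lemma norm_prod_one_sub_le {p : ℕ} (hp : p.Prime)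
    (hprim : orderOf (2 : ZMod p) = p - 1) {z : ℂ} (hz : z ^ p = 1) :
    ‖∏ i ∈ range (p - 1), (1 - z ^ 2 ^ i)‖ ≤ p := by
  have hp2 := hp.two_le
  by_cases h1 : z = 1
  · subst h1
    have : p - 1 ≠ 0 := by omega
    simp [this]
  have hprimz : IsPrimitiveRoot z p := by
    have := Fact.mk hp
    rw [← orderOf_eq_prime hz h1]
    exact IsPrimitiveRoot.orderOf z
  have hinj : Set.InjOn (fun i => 2 ^ i % p) (range (p - 1) : Set ℕ) := by
    rw [← card_image_iff, image_two_pow hp hprim,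
      card_image_of_injective _ (add_left_injective 1)]
  have hprod : ∏ i ∈ range (p - 1), (1 - z ^ 2 ^ i) = (p : ℂ) := by
    calc ∏ i ∈ range (p - 1), (1 - z ^ 2 ^ i)
        = ∏ i ∈ range (p - 1), (1 - z ^ (2 ^ i % p)) := by
          refine prod_congr rfl fun i _ => ?_
          rw [← pow_mod_orderOf z (2 ^ i), ← hprimz.eq_orderOf]
      _ = ∏ m ∈ (range (p - 1)).image (fun i => 2 ^ i % p), (1 - z ^ m) :=
          (prod_image (f := fun m => 1 - z ^ m) hinj).symm
      _ = ∏ i ∈ range (p - 1), (1 - z ^ (i + 1)) := by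
          rw [image_two_pow hp hprim, prod_image ((add_left_injective 1).injOn)]
      _ = p := by
          obtain ⟨q, rfl⟩ : ∃ q, p = q + 1 := ⟨p - 1, by omega⟩
          rw [Nat.add_sub_cancel, hprimz.prod_one_sub_pow_eq_order]
          push_cast
          ring
  rw [hprod]
  simp

lemma norm_F_rec {p : ℕ} (hp : p.Prime)
    (hprim : orderOf (2 : ZMod p) = p - 1) {z : ℂ} (hz : z ^ p = 1) (x : ℕ) :
    ‖F z x‖ ≤ p * ‖F z (x / 2 ^ (p - 1))‖ + 2 ^ (p - 1) := by
  have hnorm : ‖z‖ = 1 := Complex.norm_eq_one_of_pow_eq_one hz hp.ne_zero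
  have hper : z ^ 2 ^ (p - 1) = z := by
    have h : (2 ^ (p - 1) : ℕ) ≡ 1 [MOD p] := by
      rw [← ZMod.natCast_eq_natCast_iff]
      push_cast
      rw [← hprim, pow_orderOf_eq_one]
    exact (pow_eq_pow_of_modEq h hz).trans (pow_one z)
  have hx := Nat.div_add_mod x (2 ^ (p - 1))
  have hr : x % 2 ^ (p - 1) < 2 ^ (p - 1) := Nat.mod_lt _ (by positivity)
  set y := x / 2 ^ (p - 1)
  set r := x % 2 ^ (p - 1)
  have h1 := norm_F_add_sub_le hnorm (2 ^ (p - 1) * y) r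
  rw [hx, F_two_pow_mul, hper] at h1
  have h2 := norm_le_norm_sub_add (F z x) ((∏ i ∈ range (p - 1), (1 - z ^ 2 ^ i)) * F z y)
  rw [norm_mul] at h2
  have h3 := mul_le_mul_of_nonneg_right (norm_prod_one_sub_le hp hprim hz) (norm_nonneg (F z y))
  have h4 : (r : ℝ) ≤ 2 ^ (p - 1) := by exact_mod_cast hr.le
  linarith

/-- The constant is uniform in the `p`-th root of unity `z`. -/
lemma exists_F_bound {p : ℕ} (hp : p.Prime)
    (hprim : orderOf (2 : ZMod p) = p - 1) :
    ∃ K : ℝ, 0 ≤ K ∧ ∀ z : ℂ, z ^ p = 1 → ∀ x : ℕ, 1 ≤ x →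
      ‖F z x‖ ≤ K * (x : ℝ) ^ (Real.log p / ((p - 1) * Real.log 2)) := by
  have hp2 : (2 : ℝ) ≤ p := by exact_mod_cast hp.two_le
  have hlog2 : 0 < Real.log 2 := Real.log_pos (by norm_num)
  set α := Real.log p / ((p - 1) * Real.log 2) with hα
  have hα0 : 0 ≤ α :=
    div_nonneg (Real.log_nonneg (by linarith)) (mul_nonneg (by linarith) hlog2.le)
  set B : ℝ := 2 ^ (p - 1) with hB
  have hB0 : 0 < B := by positivity
  have hBα : B ^ α = p := by
    rw [Real.rpow_def_of_pos hB0, hB, Real.log_pow, Nat.cast_sub hp.one_le, Nat.cast_one, hα,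
      mul_div_cancel₀, Real.exp_log (by linarith)]
    exact ne_of_gt (mul_pos (by linarith) hlog2)
  -- The shift by `B` absorbs the additive error of the recursion: `B + B ≤ p * B`.
  refine ⟨2 * B, by positivity, fun z hz x hx => ?_⟩
  suffices h : ‖F z x‖ + B ≤ 2 * B * (x : ℝ) ^ α by linarith
  induction x using Nat.strong_induction_on with
  | _ x ih =>
    by_cases hlt : x < 2 ^ (p - 1)
    · have h1 := norm_F_le (Complex.norm_eq_one_of_pow_eq_one hz hp.ne_zero) x
      have h2 : (x : ℝ) ≤ B := by rw [hB]; exact_mod_cast hlt.le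
      have h3 : 1 ≤ (x : ℝ) ^ α := Real.one_le_rpow (by exact_mod_cast hx) hα0
      nlinarith
    · have hy1 : 1 ≤ x / 2 ^ (p - 1) := (Nat.one_le_div_iff (by positivity)).2 (by omega)
      have hylt : x / 2 ^ (p - 1) < x :=
        Nat.div_lt_self hx (Nat.one_lt_two_pow (by have := hp.two_le; omega))
      have hih := ih _ hylt hy1
      have hrec := norm_F_rec hp hprim hz x
      have hyx : ((x / 2 ^ (p - 1) : ℕ) : ℝ) ≤ x / B := by
        refine Nat.cast_div_le.trans_eq ?_
        rw [hB]; push_cast; rfl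
      have h5 : p * ((x / 2 ^ (p - 1) : ℕ) : ℝ) ^ α ≤ (x : ℝ) ^ α := by
        calc p * ((x / 2 ^ (p - 1) : ℕ) : ℝ) ^ α ≤ p * (x / B) ^ α := by gcongr
          _ = (x : ℝ) ^ α := by
            rw [Real.div_rpow (by positivity) hB0.le, hBα, mul_div_cancel₀]
            linarith
      calc ‖F z x‖ + B ≤ p * (‖F z (x / 2 ^ (p - 1))‖ + B) := by nlinarith
        _ ≤ p * (2 * B * ((x / 2 ^ (p - 1) : ℕ) : ℝ) ^ α) := by gcongr
        _ = 2 * B * (p * ((x / 2 ^ (p - 1) : ℕ) : ℝ) ^ α) := by ring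
        _ ≤ 2 * B * (x : ℝ) ^ α := by gcongr

/-- Orthogonality of the characters `n ↦ ζ ^ (l * n)`; the exponent `p - a` stands for `-a`. -/
lemma sum_root_pow {p : ℕ} {ζ : ℂ} (hζ : IsPrimitiveRoot ζ p) {a : ℕ} (ha : a < p)
    (n : ℕ) :
    ∑ l ∈ range p, (ζ ^ l) ^ (p - a) * (ζ ^ l) ^ n = if n % p = a then (p : ℂ) else 0 := by
  have hiff : n % p = a ↔ p ∣ p - a + n := by
    rw [← Nat.modEq_zero_iff_dvd]
    have h1 : n % p = a ↔ n ≡ a [MOD p] := by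
      rw [Nat.ModEq, Nat.mod_eq_of_lt ha]
    have h2 : p - a + a ≡ 0 [MOD p] := by
      rw [Nat.sub_add_cancel ha.le, Nat.modEq_zero_iff_dvd]
    rw [h1]
    exact ⟨fun h => (h.add_left _).trans h2,
      fun h => Nat.ModEq.add_left_cancel' (p - a) (h.trans h2.symm)⟩
  have hgeom : ∑ l ∈ range p, (ζ ^ l) ^ (p - a) * (ζ ^ l) ^ n
      = ∑ l ∈ range p, (ζ ^ (p - a + n)) ^ l := by
    refine sum_congr rfl fun l _ => ?_
    rw [← pow_add, ← pow_mul, ← pow_mul, mul_comm]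
  rw [hgeom]
  split_ifs with h
  · rw [(hζ.pow_eq_one_iff_dvd _).2 (hiff.1 h)]
    simp
  · have hne : ζ ^ (p - a + n) ≠ 1 := fun h' => h (hiff.2 ((hζ.pow_eq_one_iff_dvd _).1 h'))
    rw [geom_sum_eq hne, ← pow_mul, mul_comm, pow_mul, hζ.pow_eq_one]
    simp

lemma norm_sum_class_le {p : ℕ} (hp : p.Prime) {a : ℕ} (ha : a < p) {x : ℕ} {M : ℝ}
    (hM : ∀ z : ℂ, z ^ p = 1 → ‖F z x‖ ≤ M) :
    |∑ n ∈ range x with n % p = a, (-1 : ℝ) ^ s n| ≤ M := by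
  have hp0 : (0 : ℝ) < p := by exact_mod_cast hp.pos
  have hζ := Complex.isPrimitiveRoot_exp p hp.ne_zero
  set ζ := Complex.exp (2 * Real.pi * Complex.I / p)
  have key : ∑ l ∈ range p, (ζ ^ l) ^ (p - a) * F (ζ ^ l) x
      = p * ((∑ n ∈ range x with n % p = a, (-1 : ℝ) ^ s n : ℝ) : ℂ) := by
    unfold F
    simp_rw [mul_sum]
    rw [sum_comm, sum_filter]
    push_cast
    rw [mul_sum]
    refine sum_congr rfl fun n _ => ?_
    have : ∑ l ∈ range p, (ζ ^ l) ^ (p - a) * ((-1) ^ s n * (ζ ^ l) ^ n)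
        = (-1) ^ s n * ∑ l ∈ range p, (ζ ^ l) ^ (p - a) * (ζ ^ l) ^ n := by
      rw [mul_sum]
      exact sum_congr rfl fun l _ => by ring
    rw [this, sum_root_pow hζ ha]
    split_ifs
    · push_cast; ring
    · simp
  have hroot : ∀ l, (ζ ^ l) ^ p = 1 := fun l => by
    rw [← pow_mul, mul_comm, pow_mul, hζ.pow_eq_one, one_pow]
  have hle : ‖∑ l ∈ range p, (ζ ^ l) ^ (p - a) * F (ζ ^ l) x‖ ≤ p * M := by
    refine (norm_sum_le_of_le (range p) (f := fun l => (ζ ^ l) ^ (p - a) * F (ζ ^ l) x)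
      (n := fun _ => M) fun l _ => ?_).trans_eq (by simp)
    rw [norm_mul, norm_pow, Complex.norm_eq_one_of_pow_eq_one (hroot l) hp.ne_zero, one_pow,
      one_mul]
    exact hM _ (hroot l)
  rw [key, norm_mul, Complex.norm_real, Complex.norm_natCast, Real.norm_eq_abs] at hle
  exact le_of_mul_le_mul_left hle hp0

lemma abs_card_class_sub_le {p : ℕ} (hp : p.Prime) {a : ℕ} (ha : a < p) (x : ℕ) :
    |(#{n ∈ range x | n % p = a} : ℝ) - x / p| ≤ 1 := by
  have hp0 : (0 : ℝ) < p := by exact_mod_cast hp.pos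
  have hcount : #{n ∈ range x | n % p = a} = x.count (· ≡ a [MOD p]) := by
    rw [Nat.count_eq_card_filter_range]
    congr 1
    ext n
    simp [Nat.ModEq, Nat.mod_eq_of_lt ha]
  have hc := Nat.count_modEq_card x hp.pos a
  have h1 : ((x / p : ℕ) : ℝ) ≤ x / p := Nat.cast_div_le
  have h2 : (x : ℝ) / p < (x / p : ℕ) + 1 := by
    rw [div_lt_iff₀ hp0]
    exact_mod_cast Nat.lt_div_mul_add hp.pos |>.trans_eq (by ring)
  rw [hcount, hc, abs_le]
  split_ifs <;> push_cast <;> constructor <;> linarith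

lemma T_eq {p a j : ℕ} (hj : j < 2) (x : ℕ) :
    (T p a j x : ℝ) = (#{n ∈ range x | n % p = a}
      + (-1) ^ j * ∑ n ∈ range x with n % p = a, (-1 : ℝ) ^ s n) / 2 := by
  unfold T
  rw [← filter_filter, card_filter, card_eq_sum_ones]
  push_cast
  rw [mul_sum, ← sum_add_distrib, sum_div]
  refine sum_congr rfl fun n _ => ?_
  rw [← pow_add]
  split_ifs with h
  · rw [Even.neg_one_pow (Nat.even_iff.2 (by omega))]
    norm_num
  · rw [Odd.neg_one_pow (Nat.odd_iff.2 (by omega))]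
    norm_num

/-- Upper-bound half of Theorem 2: if `p` is an odd prime for which `2` is a primitive
root, then `T_{p,a}^{(j)}(x) = x/(2p) + O(x^{α+ε})` for every `ε > 0`, where
`α = ln p / ((p-1) ln 2)`. -/
theorem gelfond_exponent_primitive_root_upper
    (p : ℕ) (hp : p.Prime) (hodd : Odd p)
    (hprim : orderOf (2 : ZMod p) = p - 1)
    (a : ℕ) (ha : a < p) (j : ℕ) (hj : j < 2)
    (ε : ℝ) (hε : 0 < ε) :
    (fun x : ℕ => (T p a j x : ℝ) - x / (2 * p))
      =O[Filter.atTop] fun x : ℕ =>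
        (x : ℝ) ^ (Real.log p / ((p - 1) * Real.log 2) + ε) := by
  obtain ⟨K, hK, hF⟩ := exists_F_bound hp hprim
  have hp2 : (2 : ℝ) ≤ p := by exact_mod_cast hp.two_le
  have hα0 : 0 ≤ Real.log p / ((p - 1) * Real.log 2) :=
    div_nonneg (Real.log_nonneg (by linarith))
      (mul_nonneg (by linarith) (Real.log_nonneg (by norm_num)))
  set α := Real.log p / ((p - 1) * Real.log 2)
  refine Asymptotics.IsBigO.of_bound ((1 + K) / 2) ?_
  filter_upwards [Filter.eventually_ge_atTop 1] with x hx
  have hx1 : (1 : ℝ) ≤ x := by exact_mod_cast hx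
  have h1 := norm_sum_class_le hp ha fun z hz => hF z hz x hx
  have h2 := abs_card_class_sub_le hp ha x
  have h3 : 1 ≤ (x : ℝ) ^ (α + ε) := Real.one_le_rpow hx1 (by linarith)
  have h4 : (x : ℝ) ^ α ≤ (x : ℝ) ^ (α + ε) :=
    Real.rpow_le_rpow_of_exponent_le hx1 (by linarith)
  have h5 := mul_le_mul_of_nonneg_left h4 hK
  rw [T_eq hj, Real.norm_eq_abs, Real.norm_of_nonneg (by linarith)]
  set N : ℝ := (#{n ∈ range x | n % p = a} : ℝ)
  set S := ∑ n ∈ range x with n % p = a, (-1 : ℝ) ^ s n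
  have hS : |(-1) ^ j * S| = |S| := by simp [abs_mul]
  have hsplit : (N + (-1) ^ j * S) / 2 - x / (2 * p) = ((N - x / p) + (-1) ^ j * S) / 2 := by
    field_simp
    ring
  rw [hsplit, abs_div, abs_two]
  have h6 := abs_add_le (N - x / p) ((-1) ^ j * S)
  linarith
end

section
/- For every positive integer x, S_{17,0}(2^{17}·x) = 34·S_{17,0}(2^{9}·x) − 17·S_{17,0}(2·x); in particular, for every natural number n, S_{17,0}(2^{n+17}) = 34·S_{17,0}(2^{n+9}) − 17·S_{17,0}(2^{n+1}). -/
/-- Newman-like sum `S_{m,a}(x) = Σ_{0 ≤ n < x, n ≡ a (mod m)} (−1)^{s(n)}`. -/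
def S (m a x : ℕ) : ℤ :=
  ∑ n ∈ (Finset.range x).filter (fun n => n % m = a), (-1 : ℤ) ^ (s n)

lemma s_two_mul_add (m r : ℕ) (hr : r < 2) : s (2 * m + r) = s m + r := by
  unfold s
  rcases Nat.eq_zero_or_pos (2 * m + r) with h | h
  · obtain ⟨rfl, rfl⟩ : m = 0 ∧ r = 0 := by omega
    simp
  · rw [Nat.digits_def' (by norm_num) h, List.sum_cons]
    have h1 : (2 * m + r) % 2 = r := by omega
    have h2 : (2 * m + r) / 2 = m := by omega
    rw [h1, h2, add_comm]

lemma s_pow_mul_add (k m j : ℕ) (hj : j < 2 ^ k) : s (2 ^ k * m + j) = s m + s j := by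
  induction k generalizing j with
  | zero =>
    obtain rfl : j = 0 := by simpa using hj
    simp [s]
  | succ k ih =>
    have hj2 : j / 2 < 2 ^ k := by rw [pow_succ] at hj; omega
    have hjs : j = 2 * (j / 2) + j % 2 := by omega
    have e : 2 ^ (k + 1) * m + j = 2 * (2 ^ k * m + j / 2) + j % 2 := by
      rw [pow_succ, mul_add, add_assoc, ← hjs]; ring
    rw [e, s_two_mul_add _ _ (Nat.mod_lt _ two_pos), ih _ hj2]
    conv_rhs => rw [hjs, s_two_mul_add _ _ (Nat.mod_lt _ two_pos)]
    ring

lemma S_eq_sum_ite (m a x : ℕ) :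
    S m a x = ∑ n ∈ Finset.range x, if n % m = a then (-1 : ℤ) ^ s n else 0 := by
  rw [S, Finset.sum_filter]

lemma S_succ (m a x : ℕ) :
    S m a (x + 1) = S m a x + if x % m = a then (-1 : ℤ) ^ s x else 0 := by
  rw [S_eq_sum_ite, S_eq_sum_ite, Finset.sum_range_succ]

/-- The block `256 * y ≤ n < 256 * (y + 1)` is a shifted copy, up to sign, of `0 ≤ n < 256`. -/
lemma S_block (a y : ℕ) (ha : a < 17) :
    S 17 a (256 * (y + 1)) =
      S 17 a (256 * y) + S 17 ((a + 17 - y % 17) % 17) 256 * (-1 : ℤ) ^ s y := by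
  rw [S_eq_sum_ite, S_eq_sum_ite, S_eq_sum_ite, mul_add, mul_one, Finset.sum_range_add,
    Finset.sum_mul]
  congr 1
  refine Finset.sum_congr rfl fun j hj => ?_
  have hjlt : j < 2 ^ 8 := by simpa using hj
  have hs : s (256 * y + j) = s y + s j := s_pow_mul_add 8 y j hjlt
  -- `256 = 15 * 17 + 1`, so `256 * y + j ≡ y + j`.
  have hmod : (256 * y + j) % 17 = a ↔ j % 17 = (a + 17 - y % 17) % 17 := by omega
  simp only [hs, hmod, pow_add]
  split_ifs <;> ring

/-- Multiplication by `256` acts on the residue vector as cyclic convolution with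
`(S 17 b 256)_b`. -/
lemma S_mul_256 (a y : ℕ) (ha : a < 17) :
    S 17 a (256 * y) =
      ∑ b ∈ Finset.range 17, S 17 ((a + 17 - b) % 17) 256 * S 17 b y := by
  induction y with
  | zero => simp [S]
  | succ y ih =>
    rw [S_block a y ha, ih]
    simp only [S_succ 17 _ y, mul_add, Finset.sum_add_distrib, mul_ite, mul_zero,
      Finset.sum_ite_eq, Finset.mem_range, Nat.mod_lt y (by norm_num : 17 > 0), if_true]

lemma sum_S (y : ℕ) :
    ∑ a ∈ Finset.range 17, S 17 a y = ∑ n ∈ Finset.range y, (-1 : ℤ) ^ s n := by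
  simp only [S_eq_sum_ite]
  rw [Finset.sum_comm]
  refine Finset.sum_congr rfl fun n _ => ?_
  simp [Finset.sum_ite_eq, Nat.mod_lt n (by norm_num : 17 > 0)]

lemma sum_sign_even (x : ℕ) : ∑ n ∈ Finset.range (2 * x), (-1 : ℤ) ^ s n = 0 := by
  induction x with
  | zero => simp
  | succ x ih =>
    have h0 : s (2 * x) = s x := s_two_mul_add x 0 (by norm_num)
    rw [mul_add, mul_one, Finset.sum_range_succ, Finset.sum_range_succ, ih,
      s_two_mul_add x 1 (by norm_num), h0]
    ring

/-- The coefficients `S 17 b 256`, `b < 17`, of `P`. They depend only on whether `b` is zero,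
a square or a non-square modulo `17`. -/
def coeffP (b : ℕ) : ℤ :=
  [16, -5, -5, 3, -5, 3, 3, 3, -5, -5, 3, 3, 3, -5, 3, -5, -5].getD b 0

lemma S_256_eq : ∀ b ∈ Finset.range 17, S 17 b 256 = coeffP b := by
  decide +kernel

/-- The coefficients of `P ^ 2 = 34 * P - 17 + (1 + z + ⋯ + z ^ 16)`. -/
lemma S_256_conv (b : ℕ) (hb : b ∈ Finset.range 17) :
    ∑ c ∈ Finset.range 17, S 17 ((0 + 17 - c) % 17) 256 * S 17 ((c + 17 - b) % 17) 256 =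
      34 * S 17 ((0 + 17 - b) % 17) 256 - 17 * (if b = 0 then 1 else 0) + 1 := by
  have hP : ∀ n : ℕ, S 17 (n % 17) 256 = coeffP (n % 17) := fun n =>
    S_256_eq _ (Finset.mem_range.mpr (Nat.mod_lt n (by norm_num)))
  have hconv : ∀ b ∈ Finset.range 17,
      ∑ c ∈ Finset.range 17, coeffP ((0 + 17 - c) % 17) * coeffP ((c + 17 - b) % 17) =
        34 * coeffP ((0 + 17 - b) % 17) - 17 * (if b = 0 then 1 else 0) + 1 := by
    decide +kernel
  simp only [hP]
  exact hconv b hb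

lemma S_mul_256_sq (y : ℕ) :
    S 17 0 (256 * (256 * y)) =
      34 * S 17 0 (256 * y) - 17 * S 17 0 y + ∑ b ∈ Finset.range 17, S 17 b y := by
  have h1 : S 17 0 (256 * (256 * y)) = ∑ b ∈ Finset.range 17,
      (34 * S 17 ((0 + 17 - b) % 17) 256 - 17 * (if b = 0 then 1 else 0) + 1) * S 17 b y := by
    rw [S_mul_256 0 _ (by norm_num)]
    have h2 : ∀ c ∈ Finset.range 17,
        S 17 ((0 + 17 - c) % 17) 256 * S 17 c (256 * y) = ∑ b ∈ Finset.range 17,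
          S 17 ((0 + 17 - c) % 17) 256 * S 17 ((c + 17 - b) % 17) 256 * S 17 b y := by
      intro c hc
      rw [S_mul_256 c y (Finset.mem_range.mp hc), Finset.mul_sum]
      exact Finset.sum_congr rfl fun b _ => (mul_assoc _ _ _).symm
    rw [Finset.sum_congr rfl h2, Finset.sum_comm]
    refine Finset.sum_congr rfl fun b hb => ?_
    rw [← Finset.sum_mul, S_256_conv b hb]
  have h3 : ∑ b ∈ Finset.range 17, (if b = 0 then (1 : ℤ) else 0) * S 17 b y = S 17 0 y := by
    simp
  rw [h1, S_mul_256 0 y (by norm_num), ← h3, Finset.mul_sum, Finset.mul_sum,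
    ← Finset.sum_sub_distrib, ← Finset.sum_add_distrib]
  exact Finset.sum_congr rfl fun b _ => by ring

/-- Formulas (34)-(35): `S_{17,0}(2^{17}x) = 34 S_{17,0}(2^9 x) − 17 S_{17,0}(2x)`
for every positive integer `x`; in particular
`S_{17,0}(2^{n+17}) = 34 S_{17,0}(2^{n+9}) − 17 S_{17,0}(2^{n+1})` for all `n`. -/
theorem S_seventeen_recursion :
    (∀ x : ℕ, 0 < x →
      S 17 0 (2 ^ 17 * x) = 34 * S 17 0 (2 ^ 9 * x) - 17 * S 17 0 (2 * x)) ∧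
    (∀ n : ℕ,
      S 17 0 (2 ^ (n + 17)) = 34 * S 17 0 (2 ^ (n + 9)) - 17 * S 17 0 (2 ^ (n + 1))) := by
  have key : ∀ x : ℕ,
      S 17 0 (2 ^ 17 * x) = 34 * S 17 0 (2 ^ 9 * x) - 17 * S 17 0 (2 * x) := by
    intro x
    have h := S_mul_256_sq (2 * x)
    rw [sum_S, sum_sign_even, add_zero] at h
    have e1 : 2 ^ 17 * x = 256 * (256 * (2 * x)) := by ring
    have e2 : 2 ^ 9 * x = 256 * (2 * x) := by ring
    rw [e1, e2, h]
  refine ⟨fun x _ => key x, fun n => ?_⟩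
  have e17 : 2 ^ (n + 17) = 2 ^ 17 * 2 ^ n := by ring
  have e9 : 2 ^ (n + 9) = 2 ^ 9 * 2 ^ n := by ring
  have e1 : 2 ^ (n + 1) = 2 * 2 ^ n := by ring
  rw [e17, e9, e1, key]
end
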